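/- (Monotone embedding of exactness cones.) Assume X is nonempty and compact. Then for every relaxation order r, the exactness cones are monotonically embedded: F(g)^r_d ⊆ F(g)^{r+1}_d. -/

import Mathlib

/- Once `f` attains its infimum over `X` at a point `x`, evaluation at `x` is a feasible moment
functional of every relaxation order that realises the optimal value. The moment condition in the
exactness cone is then automatic, leaving only `f - f(x) ∈ Q(g)^r_d`, and the truncated quadratic
modules increase with `r`. -/

open MvPolynomial

/-- A multivariate polynomial is a sum of squares (SOS). -/
def IsSOS {n : ℕ} (p : MvPolynomial (Fin n) ℝ) : Prop :=
  ∃ (k : ℕ) (q : Fin k → MvPolynomial (Fin n) ℝ), p = ∑ i, (q i) ^ 2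

/-- The extended family of constraint polynomials, with `g₀ := 1`. -/
noncomputable def gext {n m : ℕ} (g : Fin m → MvPolynomial (Fin n) ℝ) : Fin (m + 1) → MvPolynomial (Fin n) ℝ :=
  Fin.cons 1 g

/-- The truncated quadratic module `Q(g)^r_d`, with `g₀ := 1`. -/
def Qmod {n m : ℕ} (g : Fin m → MvPolynomial (Fin n) ℝ) (r d : ℕ) :
    Set (MvPolynomial (Fin n) ℝ) :=
  {p | p.totalDegree ≤ d ∧
    ∃ s : Fin (m + 1) → MvPolynomial (Fin n) ℝ,
      (∀ i, IsSOS (s i)) ∧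
      (∀ i, (s i * gext g i).totalDegree ≤ 2 * r) ∧
      p = ∑ i, s i * gext g i}

/-- The basic semialgebraic set `X = {x ∈ ℝⁿ : gᵢ(x) ≥ 0, i = 1,…,m}`. -/
def semiSetX {n m : ℕ} (g : Fin m → MvPolynomial (Fin n) ℝ) : Set (Fin n → ℝ) :=
  {x | ∀ i, 0 ≤ eval x (g i)}

/-- The moment relaxation `R(g)^r_d`: linear functionals nonnegative on `Q(g)^r_d`. -/
def Rmom {n m : ℕ} (g : Fin m → MvPolynomial (Fin n) ℝ) (r d : ℕ) :
    Set (MvPolynomial (Fin n) ℝ →ₗ[ℝ] ℝ) :=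
  {ℓ | ∀ q ∈ Qmod g r d, 0 ≤ ℓ q}

/-- The optimal value `v(f) = inf_{x ∈ X} f(x)` of the POP. -/
noncomputable def vPOP {n m : ℕ} (g : Fin m → MvPolynomial (Fin n) ℝ)
    (f : MvPolynomial (Fin n) ℝ) : ℝ :=
  sInf ((fun x => eval x f) '' semiSetX g)

/-- The relaxed value `v^r(f) = sup {v : f - v ∈ Q(g)^r_d}`. -/
noncomputable def vRel {n m : ℕ} (g : Fin m → MvPolynomial (Fin n) ℝ) (r d : ℕ)
    (f : MvPolynomial (Fin n) ℝ) : ℝ :=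
  sSup {w : ℝ | f - C w ∈ Qmod g r d}

/-- The exactness cone `F(g)^r_d`. -/
def Fcone {n m : ℕ} (g : Fin m → MvPolynomial (Fin n) ℝ) (r d : ℕ) :
    Set (MvPolynomial (Fin n) ℝ) :=
  {f | f.totalDegree ≤ d ∧
    ∃ ℓ ∈ Rmom g r d, ∃ v : ℝ,
      ℓ 1 = 1 ∧ ℓ f = v ∧ v = vPOP g f ∧ f - C v ∈ Qmod g r d}

section

variable {n m : ℕ} {g : Fin m → MvPolynomial (Fin n) ℝ} {r r' d : ℕ}
  {p f : MvPolynomial (Fin n) ℝ} {x : Fin n → ℝ}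

theorem IsSOS.eval_nonneg (hp : IsSOS p) (x : Fin n → ℝ) : 0 ≤ eval x p := by
  obtain ⟨k, q, rfl⟩ := hp
  simp only [map_sum, map_pow]
  exact Finset.sum_nonneg fun j _ => sq_nonneg (eval x (q j))

theorem eval_gext_nonneg (hx : x ∈ semiSetX g) (i : Fin (m + 1)) : 0 ≤ eval x (gext g i) := by
  cases i using Fin.cases with
  | zero => simp [gext]
  | succ j => simpa [gext] using hx j

theorem eval_nonneg_of_mem_Qmod (hp : p ∈ Qmod g r d) (hx : x ∈ semiSetX g) : 0 ≤ eval x p := by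
  obtain ⟨-, s, hs, -, rfl⟩ := hp
  simp only [map_sum, map_mul]
  exact Finset.sum_nonneg fun i _ => mul_nonneg ((hs i).eval_nonneg x) (eval_gext_nonneg hx i)

theorem Qmod_mono (h : r ≤ r') : Qmod g r d ⊆ Qmod g r' d := by
  rintro p ⟨hpd, s, hs, hdeg, hp⟩
  exact ⟨hpd, s, hs, fun i => (hdeg i).trans (Nat.mul_le_mul_left 2 h), hp⟩

theorem aeval_mem_Rmom (hx : x ∈ semiSetX g) : (aeval x).toLinearMap ∈ Rmom g r d :=
  fun _ hq => eval_nonneg_of_mem_Qmod hq hx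

theorem vPOP_eq_eval_of_isMinOn (hx : x ∈ semiSetX g)
    (hmin : IsMinOn (fun y => eval y f) (semiSetX g) x) : vPOP g f = eval x f :=
  IsLeast.csInf_eq ⟨Set.mem_image_of_mem _ hx, Set.forall_mem_image.2 hmin⟩

theorem mem_Fcone_iff_of_isMinOn (hx : x ∈ semiSetX g)
    (hmin : IsMinOn (fun y => eval y f) (semiSetX g) x) :
    f ∈ Fcone g r d ↔ f.totalDegree ≤ d ∧ f - C (eval x f) ∈ Qmod g r d := by
  have hv : vPOP g f = eval x f := vPOP_eq_eval_of_isMinOn hx hmin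
  constructor
  · rintro ⟨hfd, -, -, v, -, -, rfl, hQ⟩
    exact ⟨hfd, hv ▸ hQ⟩
  · rintro ⟨hfd, hQ⟩
    exact ⟨hfd, (aeval x).toLinearMap, aeval_mem_Rmom hx, eval x f, map_one (aeval x), rfl,
      hv.symm, hQ⟩

end

/-- Monotone embedding of exactness cones: for `X` nonempty and compact,
`F(g)^r_d ⊆ F(g)^{r+1}_d` for every relaxation order `r`. -/
theorem stmt7 {n m : ℕ} (g : Fin m → MvPolynomial (Fin n) ℝ) (r d : ℕ)
    (hXne : (semiSetX g).Nonempty) (hXc : IsCompact (semiSetX g)) :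
    Fcone g r d ⊆ Fcone g (r + 1) d := by
  intro f hf
  obtain ⟨x, hx, hmin⟩ := hXc.exists_isMinOn hXne (continuous_eval f).continuousOn
  rw [mem_Fcone_iff_of_isMinOn hx hmin] at hf ⊢
  exact hf.imp_right fun hQ => Qmod_mono r.le_succ hQ
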